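/- arXiv:2205.10552 — 2 statements merged into one kernel-verified Lean document; each statement's English description precedes it below -/
import Mathlib

section
/- Fix integers 1 ≤ k ≤ n and p ∈ [0,1/2]. Sample a uniformly random matrix G ∈ 𝔽₂^{k×n} and let 𝒞 = {mG : m ∈ 𝔽₂^k}. Let f_ber,p be the Bernoulli distribution on 𝔽₂ⁿ, f_ber,p(x) = p^{|x|}(1−p)^{n−|x|}. Then E_G[Δ(u, f_ber,p^𝒞)] ≤ √( (1+(1−2p)²)ⁿ / 2^k ). -/
open scoped BigOperators
open scoped Classical

attribute [local instance] Fintype.ofFinite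

/-- Statistical distance between two functions on a finite set. -/
noncomputable def statDist {S : Type*} [Fintype S] (f g : S → ℝ) : ℝ :=
  (1 / 2) * ∑ x : S, |f x - g x|

/-- `f^𝒞`, the periodization of `f` over the code `𝒞`. -/
noncomputable def periodize {n : ℕ} (C : Submodule (ZMod 2) (Fin n → ZMod 2))
    (f : (Fin n → ZMod 2) → ℝ) : ((Fin n → ZMod 2) ⧸ C) → ℝ :=
  fun xbar => ∑ y : Fin n → ZMod 2,
    if (Submodule.Quotient.mk y : (Fin n → ZMod 2) ⧸ C) = xbar then f y else 0

/-- The uniform distribution on the quotient `𝔽₂ⁿ/𝒞`. -/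
noncomputable def unifQuot {n : ℕ} (C : Submodule (ZMod 2) (Fin n → ZMod 2)) :
    ((Fin n → ZMod 2) ⧸ C) → ℝ :=
  fun _ => (Nat.card ((Fin n → ZMod 2) ⧸ C) : ℝ)⁻¹

/-- The Bernoulli distribution of parameter `p` on `𝔽₂ⁿ`:
`f_ber,p(x) = p^{|x|} (1−p)^{n−|x|}`. -/
noncomputable def fber (n : ℕ) (p : ℝ) : (Fin n → ZMod 2) → ℝ :=
  fun x => p ^ (hammingNorm x) * (1 - p) ^ (n - hammingNorm x)

/-- The code generated by the matrix `G`, i.e. `{mG : m ∈ 𝔽₂ᵏ}`. -/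
def codeOf {n k : ℕ} (G : Matrix (Fin k) (Fin n) (ZMod 2)) :
    Submodule (ZMod 2) (Fin n → ZMod 2) :=
  LinearMap.range (Matrix.vecMulLinear G)

/-- All fibres of a linear map over points of its range have the same cardinality. -/
theorem LinearMap.sum_fiber_mul_card_range {R A B : Type*} [Ring R] [AddCommGroup A]
    [AddCommGroup B] [Module R A] [Module R B] [Fintype A] (φ : A →ₗ[R] B) (w : B) :
    (∑ a, if φ a = w then (1 : ℝ) else 0) * Nat.card (LinearMap.range φ) =
      if w ∈ LinearMap.range φ then (Nat.card A : ℝ) else 0 := by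
  split_ifs with hw
  · obtain ⟨a₀, rfl⟩ := hw
    have hsum : (∑ a, if φ a = φ a₀ then (1 : ℝ) else 0) = Nat.card (LinearMap.ker φ) := by
      rw [Finset.sum_boole, Nat.card_eq_fintype_card, Fintype.card_subtype]
      congr 1
      refine Finset.card_bij' (fun a _ => a - a₀) (fun a _ => a + a₀) ?_ ?_ ?_ ?_ <;>
        simp +contextual
    rw [hsum, ← Nat.cast_mul, Submodule.card_eq_card_quotient_mul_card (LinearMap.ker φ),
      Nat.card_congr φ.quotKerEquivRange.toEquiv, mul_comm]
  · rw [Finset.sum_eq_zero, zero_mul]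
    intro a _
    rw [if_neg]
    rintro rfl
    exact hw ⟨a, rfl⟩

/-- Cauchy–Schwarz bound of the statistical distance to uniform by the collision probability. -/
theorem statDist_uniform_sq_le {S : Type*} [Fintype S] (g : S → ℝ) (hg : ∑ x, g x = 1) :
    statDist (fun _ => (Nat.card S : ℝ)⁻¹) g ^ 2 ≤ Nat.card S * ∑ x, g x ^ 2 - 1 := by
  have hS : Nonempty S := by
    by_contra h
    rw [not_nonempty_iff] at h
    simp at hg
  have hN : (0 : ℝ) < Nat.card S := by exact_mod_cast Nat.card_pos
  have hcs := sq_sum_le_card_mul_sum_sq (s := Finset.univ)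
    (f := fun x => |(Nat.card S : ℝ)⁻¹ - g x|)
  have hexp : (Nat.card S : ℝ) * ∑ x, ((Nat.card S : ℝ)⁻¹ - g x) ^ 2 =
      Nat.card S * ∑ x, g x ^ 2 - 1 := by
    simp only [sub_sq, Finset.sum_add_distrib, Finset.sum_sub_distrib, ← Finset.mul_sum, hg,
      Finset.sum_const, Finset.card_univ, ← Nat.card_eq_fintype_card, nsmul_eq_mul]
    field_simp
    ring
  simp only [sq_abs, Finset.card_univ, ← Nat.card_eq_fintype_card] at hcs
  rw [hexp] at hcs
  rw [statDist, mul_pow]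
  nlinarith [sq_nonneg (∑ x, |(Nat.card S : ℝ)⁻¹ - g x|)]

theorem sum_periodize {n : ℕ} (C : Submodule (ZMod 2) (Fin n → ZMod 2))
    (f : (Fin n → ZMod 2) → ℝ) : ∑ x, periodize C f x = ∑ y, f y := by
  simp only [periodize]
  rw [Finset.sum_comm]
  simp

theorem sum_periodize_sq {n : ℕ} (C : Submodule (ZMod 2) (Fin n → ZMod 2))
    (f : (Fin n → ZMod 2) → ℝ) :
    ∑ x, periodize C f x ^ 2 = ∑ y, ∑ z, f y * f z * if y - z ∈ C then 1 else 0 := by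
  simp only [periodize, sq, Finset.sum_mul_sum]
  rw [Finset.sum_comm]
  refine Finset.sum_congr rfl fun y _ => ?_
  rw [Finset.sum_comm]
  refine Finset.sum_congr rfl fun z _ => ?_
  simp only [ite_mul, zero_mul, Finset.sum_ite_eq, Finset.mem_univ, if_true,
    ← Submodule.Quotient.eq]
  by_cases h : (Submodule.Quotient.mk y : (Fin n → ZMod 2) ⧸ C) = Submodule.Quotient.mk z
  · simp [h]
  · simp [h, Ne.symm h]

theorem card_quotient_codeOf_mul_indicator {n k : ℕ} (G : Matrix (Fin k) (Fin n) (ZMod 2))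
    (w : Fin n → ZMod 2) :
    (Nat.card ((Fin n → ZMod 2) ⧸ codeOf G) : ℝ) * (if w ∈ codeOf G then 1 else 0) =
      2 ^ n / 2 ^ k * ∑ m : Fin k → ZMod 2, if Matrix.vecMul m G = w then (1 : ℝ) else 0 := by
  have hfib : (∑ m : Fin k → ZMod 2, if Matrix.vecMul m G = w then (1 : ℝ) else 0) *
      Nat.card (codeOf G) = if w ∈ codeOf G then 2 ^ k else 0 := by
    convert LinearMap.sum_fiber_mul_card_range (Matrix.vecMulLinear G) w
    · exact (Matrix.vecMulLinear_apply G _).symm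
    · rfl
    · rfl
    · rw [Nat.card_fun]
      simp
  have hcard : (2 : ℝ) ^ n =
      Nat.card (codeOf G) * Nat.card ((Fin n → ZMod 2) ⧸ codeOf G) := by
    have := Submodule.card_eq_card_quotient_mul_card (codeOf G)
    rw [Nat.card_fun] at this
    simp only [Nat.card_zmod, Nat.card_fin] at this
    exact_mod_cast this
  rw [hcard, div_mul_eq_mul_div, eq_div_iff (by positivity), mul_right_comm (Nat.card _ : ℝ),
    mul_comm (Nat.card (codeOf G) : ℝ), mul_assoc _ (Nat.card (codeOf G) : ℝ),
    mul_comm (Nat.card (codeOf G) : ℝ), hfib]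
  split_ifs <;> ring

theorem card_matrix_zmod_two (k n : ℕ) :
    (Nat.card (Matrix (Fin k) (Fin n) (ZMod 2)) : ℝ) = 2 ^ (k * n) := by
  rw [Nat.card_congr (Matrix.of (m := Fin k) (n := Fin n) (α := ZMod 2)).symm, Nat.card_fun,
    Nat.card_fun]
  simp [← pow_mul, mul_comm]

/-- For nonzero `m`, the vector `mG` is uniform when `G` is. -/
theorem sum_vecMul_eq_of_ne_zero {n k : ℕ} {m : Fin k → ZMod 2} (hm : m ≠ 0)
    (w : Fin n → ZMod 2) :
    (∑ G : Matrix (Fin k) (Fin n) (ZMod 2), if Matrix.vecMul m G = w then (1 : ℝ) else 0) =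
      2 ^ (k * n) / 2 ^ n := by
  let φ : Matrix (Fin k) (Fin n) (ZMod 2) →ₗ[ZMod 2] (Fin n → ZMod 2) :=
    Matrix.vecMulBilin (ZMod 2) (ZMod 2) m
  have hφ (G) : φ G = Matrix.vecMul m G := rfl
  have hsurj : LinearMap.range φ = ⊤ := by
    rw [LinearMap.range_eq_top]
    intro v
    obtain ⟨i, hi⟩ := Function.ne_iff.mp hm
    refine ⟨Matrix.of (Pi.single i ((m i)⁻¹ • v)), ?_⟩
    ext j
    rw [hφ, Matrix.vecMul, dotProduct, Finset.sum_eq_single i]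
    · simp [mul_inv_cancel_left₀ hi]
    · intro b _ hb
      simp [hb]
    · simp
  have hfib := LinearMap.sum_fiber_mul_card_range φ w
  rw [hsurj, if_pos Submodule.mem_top] at hfib
  rw [card_matrix_zmod_two, Nat.card_congr (Submodule.topEquiv (R := ZMod 2)).toEquiv,
    Nat.card_fun] at hfib
  simp only [Nat.card_zmod, Nat.card_fin, Nat.cast_pow, Nat.cast_ofNat, hφ] at hfib
  rwa [eq_div_iff (by positivity)]

theorem sum_sum_vecMul_eq {n k : ℕ} (w : Fin n → ZMod 2) :
    (∑ G : Matrix (Fin k) (Fin n) (ZMod 2), ∑ m : Fin k → ZMod 2,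
        if Matrix.vecMul m G = w then (1 : ℝ) else 0) =
      2 ^ (k * n) * ((if w = 0 then 1 else 0) + (2 ^ k - 1) / 2 ^ n) := by
  rw [Finset.sum_comm, ← Finset.add_sum_erase _ _ (Finset.mem_univ (0 : Fin k → ZMod 2)),
    Finset.sum_congr rfl fun m hm => sum_vecMul_eq_of_ne_zero (Finset.ne_of_mem_erase hm) w]
  have hG : (Fintype.card (Matrix (Fin k) (Fin n) (ZMod 2)) : ℝ) = 2 ^ (k * n) := by
    rw [← Nat.card_eq_fintype_card, card_matrix_zmod_two]
  have hV : (((Finset.univ : Finset (Fin k → ZMod 2)).erase 0).card : ℝ) = 2 ^ k - 1 := by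
    rw [Finset.cast_card_erase_of_mem (Finset.mem_univ _), Finset.card_univ,
      ← Nat.card_eq_fintype_card, Nat.card_fun]
    simp
  simp only [Matrix.zero_vecMul, Finset.sum_const, nsmul_eq_mul, hV, Finset.card_univ, hG,
    eq_comm (a := (0 : Fin n → ZMod 2))]
  ring

theorem fber_eq_prod {n : ℕ} (p : ℝ) (x : Fin n → ZMod 2) :
    fber n p x = ∏ i, if x i = 0 then 1 - p else p := by
  have hc := Finset.card_filter_add_card_filter_not (s := (Finset.univ : Finset (Fin n)))
    (fun i => x i ≠ 0)
  rw [Finset.prod_ite, Finset.prod_const, Finset.prod_const, fber, hammingNorm, mul_comm]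
  simp only [Finset.card_univ, Fintype.card_fin, not_not] at hc
  congr 2
  omega

theorem sum_fber_pow (n : ℕ) (p : ℝ) (r : ℕ) :
    ∑ x, fber n p x ^ r = ((1 - p) ^ r + p ^ r) ^ n := by
  have h := Fintype.sum_pow (fun a : ZMod 2 => (if a = 0 then 1 - p else p) ^ r) n
  have h2 : ∑ a : ZMod 2, (if a = 0 then 1 - p else p) ^ r = (1 - p) ^ r + p ^ r := by
    have huniv : (Finset.univ : Finset (ZMod 2)) = {0, 1} := by
      ext a
      simp only [Finset.mem_univ, Finset.mem_insert, Finset.mem_singleton, true_iff]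
      fin_cases a
      exacts [Or.inl rfl, Or.inr rfl]
    rw [huniv]
    simp
  rw [h2] at h
  rw [h]
  simp only [fber_eq_prod, Finset.prod_pow]

theorem sum_card_mul_sum_periodize_sq {n : ℕ} (k : ℕ) (f : (Fin n → ZMod 2) → ℝ)
    (hf : ∑ y, f y = 1) :
    ∑ G : Matrix (Fin k) (Fin n) (ZMod 2),
        (Nat.card ((Fin n → ZMod 2) ⧸ codeOf G) : ℝ) * ∑ x, periodize (codeOf G) f x ^ 2 =
      2 ^ (k * n) * (2 ^ n / 2 ^ k * ∑ y, f y ^ 2 + (1 - 1 / 2 ^ k)) := by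
  calc
    _ = ∑ G : Matrix (Fin k) (Fin n) (ZMod 2), ∑ y, ∑ z, f y * f z * (2 ^ n / 2 ^ k *
          ∑ m : Fin k → ZMod 2, if Matrix.vecMul m G = y - z then (1 : ℝ) else 0) := by
      refine Finset.sum_congr rfl fun G _ => ?_
      simp only [sum_periodize_sq, ← card_quotient_codeOf_mul_indicator]
      rw [Finset.mul_sum]
      refine Finset.sum_congr rfl fun y _ => ?_
      rw [Finset.mul_sum]
      refine Finset.sum_congr rfl fun z _ => ?_
      ring
    _ = ∑ y, ∑ z, f y * f z * (2 ^ n / 2 ^ k * (2 ^ (k * n) *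
          ((if y - z = 0 then 1 else 0) + (2 ^ k - 1) / 2 ^ n))) := by
      rw [Finset.sum_comm]
      refine Finset.sum_congr rfl fun y _ => ?_
      rw [Finset.sum_comm]
      refine Finset.sum_congr rfl fun z _ => ?_
      rw [← Finset.mul_sum, ← Finset.mul_sum, sum_sum_vecMul_eq]
    _ = ∑ y, ∑ z, (2 ^ (k * n) * (2 ^ n / 2 ^ k) * (if y = z then f y * f z else 0) +
          2 ^ (k * n) * (1 - 1 / 2 ^ k) * (f y * f z)) := by
      refine Finset.sum_congr rfl fun y _ => Finset.sum_congr rfl fun z _ => ?_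
      simp only [sub_eq_zero]
      split_ifs
      · field_simp
      · field_simp
        ring
    _ = _ := by
      simp only [Finset.sum_add_distrib, ← Finset.mul_sum, hf, mul_one, Finset.sum_ite_eq,
        Finset.mem_univ, if_true, ← sq]
      ring

/-- For `1 ≤ k ≤ n` and `p ∈ [0,1/2]`, the expectation over a uniform `G ∈ 𝔽₂^{k×n}` of
`Δ(u, f_ber,p^𝒞)`, where `𝒞` is the code generated by `G`, is at most
`√((1+(1−2p)²)ⁿ/2^k)`. -/
theorem expected_statDist_bernoulli_random_code {n k : ℕ} (hk1 : 1 ≤ k) (hkn : k ≤ n)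
    (p : ℝ) (hp : p ∈ Set.Icc (0 : ℝ) (1 / 2)) :
    (∑ G : Matrix (Fin k) (Fin n) (ZMod 2),
        statDist (unifQuot (codeOf G)) (periodize (codeOf G) (fber n p))) /
        (2 : ℝ) ^ (k * n) ≤
      Real.sqrt ((1 + (1 - 2 * p) ^ 2) ^ n / (2 : ℝ) ^ k) := by
  have hsum : ∑ y, fber n p y = 1 := by simpa using sum_fber_pow n p 1
  have hcard : (Fintype.card (Matrix (Fin k) (Fin n) (ZMod 2)) : ℝ) = 2 ^ (k * n) := by
    rw [← Nat.card_eq_fintype_card, card_matrix_zmod_two]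
  have hcs := sq_sum_le_card_mul_sum_sq (s := Finset.univ)
    (f := fun G : Matrix (Fin k) (Fin n) (ZMod 2) =>
      statDist (unifQuot (codeOf G)) (periodize (codeOf G) (fber n p)))
  have hle := Finset.sum_le_sum fun (G : Matrix (Fin k) (Fin n) (ZMod 2)) (_ : G ∈ Finset.univ) =>
    statDist_uniform_sq_le (periodize (codeOf G) (fber n p)) ((sum_periodize _ _).trans hsum)
  rw [Finset.sum_sub_distrib, sum_card_mul_sum_periodize_sq k _ hsum, Finset.sum_const,
    Finset.card_univ, nsmul_eq_mul, hcard, sum_fber_pow] at hle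
  rw [Finset.card_univ, hcard] at hcs
  apply Real.le_sqrt_of_sq_le
  rw [div_pow, div_le_iff₀ (by positivity)]
  refine hcs.trans ((mul_le_mul_of_nonneg_left hle (by positivity)).trans ?_)
  have hbase : (2 : ℝ) ^ n * ((1 - p) ^ 2 + p ^ 2) ^ n = (1 + (1 - 2 * p) ^ 2) ^ n := by
    rw [← mul_pow]
    ring
  rw [div_mul_eq_mul_div, hbase]
  have : (0 : ℝ) ≤ (2 ^ (k * n)) ^ 2 * (1 / 2 ^ k) := by positivity
  linarith
end

section
/- Let n ≥ 1, s > 0 and η ∈ (0,1), and set w̄ = √(1−η)·s·√(n/(2π)). With G_n(x) = x^{n+1}·V_n(1)·2π·exp(−πx²), one has (1/s)·∫₀^{w̄} G_n(w/s) dw ≤ exp(−η²·n/8). -/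
open MeasureTheory

/-- `V_n(w) = π^{n/2} wⁿ / Γ(n/2+1)`, the volume of the Euclidean `n`-ball of radius `w`. -/
noncomputable def Vball (n : ℕ) (w : ℝ) : ℝ :=
  Real.pi ^ ((n : ℝ) / 2) * w ^ n / Real.Gamma ((n : ℝ) / 2 + 1)

/-- `G_n(x) = x^{n+1} V_n(1) 2π exp(−πx²)`. -/
noncomputable def Gfun (n : ℕ) (x : ℝ) : ℝ :=
  x ^ (n + 1) * Vball n 1 * (2 * Real.pi) * Real.exp (-Real.pi * x ^ 2)

/-- The second-order Taylor polynomial of `-log (1 - x)` bounds it from below. -/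
theorem add_sq_div_two_le_neg_log_one_sub {x : ℝ} (h0 : 0 ≤ x) (h1 : x < 1) :
    x + x ^ 2 / 2 ≤ -Real.log (1 - x) := by
  have h := sum_le_hasSum (Finset.range 2) (fun i _ => by positivity)
    (Real.hasSum_pow_div_log_of_abs_lt_one (abs_lt.2 ⟨by linarith, h1⟩))
  norm_num [Finset.sum_range_succ] at h
  linarith

theorem Vball_one_pos (n : ℕ) : 0 < Vball n 1 := by
  have := Real.pi_pos
  have : 0 < Real.Gamma ((n : ℝ) / 2 + 1) := Real.Gamma_pos_of_pos (by positivity)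
  unfold Vball
  positivity

/-- The Gaussian moment `∫₀^∞ x^{n+1} exp(-bπx²) dx`, normalised as in `Gfun`. -/
theorem Vball_mul_integral_pow_mul_exp (n : ℕ) {b : ℝ} (hb : 0 < b) :
    Vball n 1 * (2 * Real.pi) *
        ∫ x in Set.Ioi (0 : ℝ), x ^ (n + 1) * Real.exp (-(b * Real.pi) * x ^ 2) =
      b ^ (-((n : ℝ) / 2 + 1)) := by
  have hpi := Real.pi_pos
  have hG : 0 < Real.Gamma ((n : ℝ) / 2 + 1) := Real.Gamma_pos_of_pos (by positivity)
  have h := integral_rpow_mul_exp_neg_mul_rpow (p := 2) (q := (n : ℝ) + 1) (b := b * Real.pi)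
    two_pos (by linarith [(Nat.cast_nonneg n : (0 : ℝ) ≤ n)]) (by positivity)
  have e : ((n : ℝ) + 1 + 1) / 2 = (n : ℝ) / 2 + 1 := by ring
  have e2 : (n : ℝ) + 1 = ((n + 1 : ℕ) : ℝ) := by push_cast; rfl
  rw [neg_div, e, e2] at h
  simp only [Real.rpow_natCast, Real.rpow_two] at h
  rw [h, Vball, Real.mul_rpow hb.le hpi.le, Real.rpow_neg hpi.le, Real.rpow_add_one hpi.ne']
  have : 0 < Real.pi ^ ((n : ℝ) / 2) := by positivity
  field_simp
  simp

theorem integrableOn_pow_mul_exp_neg_mul_sq (n : ℕ) {b : ℝ} (hb : 0 < b) :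
    IntegrableOn (fun x : ℝ => x ^ n * Real.exp (-b * x ^ 2)) (Set.Ioi 0) := by
  have h := integrableOn_rpow_mul_exp_neg_mul_sq hb (s := n)
    (by linarith [(Nat.cast_nonneg n : (0 : ℝ) ≤ n)])
  simpa only [Real.rpow_natCast] using h

/-- Chernoff bound for the distribution with density `Gfun n`, with exponential tilt `b - 1`. -/
theorem integral_Gfun_le (n : ℕ) {b c : ℝ} (hb : 1 ≤ b) (hc : 0 ≤ c) :
    ∫ x in (0 : ℝ)..c, Gfun n x ≤
      Real.exp ((b - 1) * Real.pi * c ^ 2) * b ^ (-((n : ℝ) / 2 + 1)) := by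
  have hpi := Real.pi_pos
  have hb0 : 0 < b := by linarith
  have hV := Vball_one_pos n
  set f : ℝ → ℝ := fun x => x ^ (n + 1) * Real.exp (-(b * Real.pi) * x ^ 2) with hf
  set K := Real.exp ((b - 1) * Real.pi * c ^ 2) * (Vball n 1 * (2 * Real.pi)) with hK
  have hK0 : 0 ≤ K := by positivity
  calc ∫ x in (0 : ℝ)..c, Gfun n x ≤ ∫ x in (0 : ℝ)..c, K * f x := by
        apply intervalIntegral.integral_mono_on hc
        · apply Continuous.intervalIntegrable
          unfold Gfun
          fun_prop
        · apply Continuous.intervalIntegrable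
          fun_prop
        · rintro x ⟨hx0, hxc⟩
          have hexp : Real.exp (-Real.pi * x ^ 2) ≤
              Real.exp ((b - 1) * Real.pi * c ^ 2) * Real.exp (-(b * Real.pi) * x ^ 2) := by
            rw [← Real.exp_add, Real.exp_le_exp]
            have : (b - 1) * Real.pi * x ^ 2 ≤ (b - 1) * Real.pi * c ^ 2 := by
              have : 0 ≤ b - 1 := by linarith
              gcongr
            linarith
          calc Gfun n x ≤ x ^ (n + 1) * Vball n 1 * (2 * Real.pi) *
                (Real.exp ((b - 1) * Real.pi * c ^ 2) * Real.exp (-(b * Real.pi) * x ^ 2)) := by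
                unfold Gfun
                gcongr
            _ = K * f x := by simp only [hK, hf]; ring
    _ = K * ∫ x in Set.Ioc 0 c, f x := by
        rw [intervalIntegral.integral_const_mul, intervalIntegral.integral_of_le hc]
    _ ≤ K * ∫ x in Set.Ioi 0, f x := by
        refine mul_le_mul_of_nonneg_left ?_ hK0
        apply setIntegral_mono_set (integrableOn_pow_mul_exp_neg_mul_sq _ (by positivity))
        · filter_upwards [ae_restrict_mem measurableSet_Ioi] with x hx
          have : 0 < x := hx
          simp only [Pi.zero_apply]
          positivity
        · exact Set.Ioc_subset_Ioi_self.eventuallyLE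
    _ = _ := by rw [hK, mul_assoc, Vball_mul_integral_pow_mul_exp n hb0]

/-- Gaussian lower-tail bound for the ball decomposition: for `w̄ = √(1−η) s √(n/2π)`,
`(1/s) ∫₀^{w̄} G_n(w/s) dw ≤ exp(−η²n/8)`. -/
theorem gaussian_ball_decomposition_tail_bound (n : ℕ) (hn : 1 ≤ n) (s η : ℝ)
    (hs : 0 < s) (hη : η ∈ Set.Ioo (0 : ℝ) 1) :
    (1 / s) * (∫ w in (0 : ℝ)..(Real.sqrt (1 - η) * s * Real.sqrt (n / (2 * Real.pi))),
        Gfun n (w / s)) ≤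
      Real.exp (-η ^ 2 * n / 8) := by
  obtain ⟨h0, h1⟩ := hη
  have hpi := Real.pi_pos
  have h1' : 0 < 1 - η := by linarith
  set c := Real.sqrt (1 - η) * Real.sqrt (n / (2 * Real.pi)) with hc
  have hw : Real.sqrt (1 - η) * s * Real.sqrt (n / (2 * Real.pi)) / s = c := by
    rw [hc]
    field_simp
  have hc2 : ((1 - η)⁻¹ - 1) * Real.pi * c ^ 2 = η * n / 2 := by
    rw [hc, mul_pow, Real.sq_sqrt h1'.le, Real.sq_sqrt (by positivity)]
    field_simp
    ring
  rw [intervalIntegral.integral_comp_div _ hs.ne', hw, zero_div, smul_eq_mul, ← mul_assoc,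
    one_div_mul_cancel hs.ne', one_mul]
  refine (integral_Gfun_le n (b := (1 - η)⁻¹) ((one_le_inv₀ h1').2 (by linarith))
    (by positivity)).trans ?_
  rw [hc2, Real.inv_rpow h1'.le, Real.rpow_neg h1'.le, inv_inv, Real.rpow_def_of_pos h1',
    ← Real.exp_add, Real.exp_le_exp]
  have hlog := mul_le_mul_of_nonneg_right (add_sq_div_two_le_neg_log_one_sub h0.le h1)
    (by positivity : (0 : ℝ) ≤ (n : ℝ) / 2 + 1)
  have : 0 ≤ η ^ 2 * n := by positivity
  nlinarith
end
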